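/- Let K be a pure i-dimensional orientable abstract simplicial complex with weights w(F) = 1 for every i-face F and w(E) = deg E for every (i−1)-face E, and suppose there is a constant D > 0 with Σ_{E ∈ ∂F} 1/deg E = 1/D for every i-face F. If f : S_i(K) → ℝ is an eigenfunction of the i-down Laplacian Δ_i^down with eigenvalue λ, then for every ε ∈ [0,1] and every i-face F, Σ_{F'' ∈ S_i(K)} m_F^ε(F'')·f(F'') = ( 2ε/(D(i+1)) + (1 − ε) − λε/(i+1) )·f(F). -/

import Mathlib

/-!
Splitting off the diagonal term, both `Σ m_F^ε(F'') f(F'')` and `(Δ_i^down f)(F)` are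
expressed through the same off-diagonal sum
`S = Σ_{F' ~ F} f(F') / deg (F ∩ F')`:
the former equals `(1 - ε + ε / (D (i+1))) f(F) + ε / (i+1) · S`, the latter `f(F) / D - S`.
The eigenvalue equation gives `S = f(F) / D - λ f(F)`, and substituting yields the identity.
The only combinatorial input is that for distinct `i`-faces `F`, `F'` the `i`-element subsets
of `F` contained in `F'` are exactly `F ∩ F'` if `F ~ F'`, and there are none otherwise
(`sum_common_facet`); exchanging the two sums in `Δ_i^down` then gives `lapDown_eq`.
-/

open Finset Filter

namespace SCRicci

variable {V : Type*}

/-- `K` is an abstract simplicial complex: faces are nonempty finite sets and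
nonempty subsets of faces are again faces. -/
def IsComplex [DecidableEq V] (K : Finset (Finset V)) : Prop :=
  ∀ F ∈ K, F.Nonempty ∧ ∀ E : Finset V, E ⊆ F → E.Nonempty → E ∈ K

/-- The set `S_i(K)` of `i`-faces of `K` (faces of cardinality `i+1`). -/
def faces [DecidableEq V] (K : Finset (Finset V)) (i : ℕ) : Finset (Finset V) :=
  K.filter fun F => F.card = i + 1

/-- Two `i`-faces are connected, `F ~ F'`, if they are distinct and share a common
`(i-1)`-face, which is necessarily `F ∩ F'`. -/
def Conn [DecidableEq V] (i : ℕ) (F F' : Finset V) : Prop :=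
  F ≠ F' ∧ (F ∩ F').card = i

noncomputable section

/-- The degree of an `(i-1)`-face `E`: the sum of the weights of the `i`-faces
containing `E`. -/
def deg [DecidableEq V] (K : Finset (Finset V)) (w : Finset V → ℝ) (i : ℕ)
    (E : Finset V) : ℝ :=
  ∑ F ∈ faces K i, if E ⊆ F then w F else 0

/-- `Chain K i n F F'`: there is a path of length `n` of consecutively connected
`i`-faces from `F` to `F'`. -/
def Chain [DecidableEq V] (K : Finset (Finset V)) (i : ℕ) :
    ℕ → Finset V → Finset V → Prop
  | 0, F, F' => F = F'
  | n + 1, F, F' => ∃ G ∈ faces K i, Conn i F G ∧ Chain K i n G F'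

/-- The distance between two `i`-faces: the length of a shortest path of
consecutively connected `i`-faces. -/
def fdist [DecidableEq V] (K : Finset (Finset V)) (i : ℕ) (F F' : Finset V) : ℕ :=
  sInf {n | Chain K i n F F'}

/-- `K` is connected in dimension `i`: any two `i`-faces are joined by a path of
consecutively connected `i`-faces. -/
def ComplexConnected [DecidableEq V] (K : Finset (Finset V)) (i : ℕ) : Prop :=
  ∀ F ∈ faces K i, ∀ F' ∈ faces K i, ∃ n, Chain K i n F F'

/-- The probability measure `m_F^ε` on the `i`-faces of `K`. -/
def pm [DecidableEq V] (K : Finset (Finset V)) (w : Finset V → ℝ) (i : ℕ) (ε : ℝ)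
    (F F' : Finset V) : ℝ :=
  if F' = F then
    1 - ε + ε / ((i : ℝ) + 1) * ∑ E ∈ F.powersetCard i, w F / deg K w i E
  else if F' ∈ faces K i ∧ (F ∩ F').card = i then
    ε * w F' / (((i : ℝ) + 1) * deg K w i (F ∩ F'))
  else 0

/-- The 1-Wasserstein distance between two measures on the `i`-faces of `K`:
the infimum of the transport cost over all couplings. -/
def Wass [DecidableEq V] (K : Finset (Finset V)) (i : ℕ) (μ ν : Finset V → ℝ) : ℝ :=
  sInf {c : ℝ | ∃ A : Finset V → Finset V → ℝ,
    (∀ F₁ F₂, 0 ≤ A F₁ F₂) ∧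
    (∀ F₁ ∈ faces K i, ∑ F₂ ∈ faces K i, A F₁ F₂ = μ F₁) ∧
    (∀ F₂ ∈ faces K i, ∑ F₁ ∈ faces K i, A F₁ F₂ = ν F₂) ∧
    c = ∑ F₁ ∈ faces K i, ∑ F₂ ∈ faces K i, A F₁ F₂ * (fdist K i F₁ F₂ : ℝ)}

/-- The `ε`-Ricci curvature of two distinct `i`-faces:
`κ_ε(F, F') = 1 - W(m_F^ε, m_{F'}^ε) / d(F, F')`. -/
def kappaEps [DecidableEq V] (K : Finset (Finset V)) (w : Finset V → ℝ) (i : ℕ)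
    (ε : ℝ) (F F' : Finset V) : ℝ :=
  1 - Wass K i (pm K w i ε F) (pm K w i ε F') / (fdist K i F F' : ℝ)

/-- The Ricci curvature `κ(F, F')`: the limit of `κ_ε(F, F') / ε` as `ε → 0+`. -/
def ricci [DecidableEq V] (K : Finset (Finset V)) (w : Finset V → ℝ) (i : ℕ)
    (F F' : Finset V) : ℝ :=
  limUnder (nhdsWithin (0 : ℝ) (Set.Ioi 0)) fun ε => kappaEps K w i ε F F' / ε

/-- The `i`-down Laplacian `Δ_i^down` for the weights `w(F) = 1` on `i`-faces and
`w(E) = deg E` on `(i-1)`-faces: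
`(Δ_i^down f)(F) = Σ_{E ∈ ∂F} (1 / deg E) · (f F - Σ_{F' ∈ S_i, F' ≠ F, E ⊆ F'} f F')`. -/
def lapDown [DecidableEq V] (K : Finset (Finset V)) (w : Finset V → ℝ) (i : ℕ)
    (f : Finset V → ℝ) (F : Finset V) : ℝ :=
  ∑ E ∈ F.powersetCard i, (1 / deg K w i E) *
    (f F - ∑ F' ∈ (faces K i).filter (fun F' => F' ≠ F ∧ E ⊆ F'), f F')

/-- `K` is pure of dimension `i`: every face is contained in an `i`-face and
there are no faces of dimension larger than `i` (so every facet has dimension `i`). -/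
def IsPure [DecidableEq V] (K : Finset (Finset V)) (i : ℕ) : Prop :=
  (∀ F ∈ K, F.card ≤ i + 1) ∧ ∀ F ∈ K, ∃ G ∈ K, F ⊆ G ∧ G.card = i + 1

/-- The sign of the `(i-1)`-face `E` inside the boundary of the `i`-face `F`, both
taken with the orientation induced by the linear order on the vertices: it is
`(-1)^j` where `j` is the position in `F` of the vertex removed from `F` to get `E`. -/
def sgnBd [LinearOrder V] (F E : Finset V) : ℤ :=
  ∏ v ∈ F \ E, (-1 : ℤ) ^ (F.filter fun u => u < v).card

/-- `K` is orientable in dimension `i`: the `i`-faces can be oriented (recorded by a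
sign `o F = ±1` relative to the orientation induced by the linear order on the
vertices) in such a way that any two connected `i`-faces induce opposite
orientations on their common `(i-1)`-face. -/
def Orientable [LinearOrder V] (K : Finset (Finset V)) (i : ℕ) : Prop :=
  ∃ o : Finset V → ℤ, (∀ F ∈ faces K i, o F = 1 ∨ o F = -1) ∧
    ∀ F ∈ faces K i, ∀ F' ∈ faces K i, Conn i F F' →
      o F * o F' * sgnBd F (F ∩ F') * sgnBd F' (F ∩ F') = -1

/-- Two distinct sets with `i + 1` elements meet in at most `i` elements, so their only possible
common `i`-element subset is the intersection. -/
theorem sum_common_facet [DecidableEq V] {i : ℕ} {F F' : Finset V} (hF : F.card = i + 1)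
    (hF' : F'.card = i + 1) (hne : F' ≠ F) (g : Finset V → ℝ) :
    ∑ E ∈ F.powersetCard i, (if E ⊆ F' then g E else 0)
      = if (F ∩ F').card = i then g (F ∩ F') else 0 := by
  have hfil : (F.powersetCard i).filter (fun E => E ⊆ F') = (F ∩ F').powersetCard i := by
    ext E
    simp only [mem_filter, mem_powersetCard, subset_inter_iff]
    tauto
  have hle : (F ∩ F').card ≤ i := by
    by_contra! h
    have h1 : F ∩ F' = F := eq_of_subset_of_card_le inter_subset_left (by omega)
    have h2 : F ∩ F' = F' := eq_of_subset_of_card_le inter_subset_right (by omega)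
    exact hne (h2.symm.trans h1)
  rw [← sum_filter, hfil]
  split_ifs with h
  · have hs : (F ∩ F').powersetCard i = {F ∩ F'} := by
      conv_lhs => rw [← h]
      exact powersetCard_self _
    rw [hs, sum_singleton]
  · rw [powersetCard_eq_empty.2 (lt_of_le_of_ne hle h), sum_empty]

/-- The down Laplacian as a diagonal term minus a sum over the faces connected to `F`. -/
theorem lapDown_eq [DecidableEq V] (K : Finset (Finset V)) (w : Finset V → ℝ) (i : ℕ)
    (f : Finset V → ℝ) {F : Finset V} (hF : F ∈ faces K i) :
    lapDown K w i f F = (∑ E ∈ F.powersetCard i, 1 / deg K w i E) * f F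
      - ∑ F' ∈ (faces K i).erase F,
          if (F ∩ F').card = i then 1 / deg K w i (F ∩ F') * f F' else 0 := by
  have hcard : ∀ G ∈ faces K i, G.card = i + 1 := fun G hG => (mem_filter.1 hG).2
  unfold lapDown
  simp only [mul_sub, sum_sub_distrib]
  rw [← sum_mul]
  congr 1
  have hfil : ∀ E : Finset V, (faces K i).filter (fun F' => F' ≠ F ∧ E ⊆ F')
      = ((faces K i).erase F).filter (fun F' => E ⊆ F') := by
    intro E
    ext F'
    simp only [mem_filter, mem_erase]
    tauto
  simp only [hfil, sum_filter, mul_sum, mul_ite, mul_zero]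
  rw [sum_comm]
  refine sum_congr rfl fun F' hF' => ?_
  obtain ⟨hne, hmem⟩ := mem_erase.1 hF'
  exact sum_common_facet (g := fun E => 1 / deg K w i E * f F')
    (hcard F hF) (hcard F' hmem) hne

/-- For a pure orientable `i`-dimensional complex with weights
`w(F) = 1` on `i`-faces and `w(E) = deg E` on `(i-1)`-faces, such that
`Σ_{E ∈ ∂F} 1/deg E = 1/D` for every `i`-face `F`, if `f` is an eigenfunction of
`Δ_i^down` with eigenvalue `λ`, then for every `ε ∈ [0,1]` and every `i`-face `F`,
`Σ_{F'' ∈ S_i(K)} m_F^ε(F'')·f(F'') = (2ε/(D(i+1)) + (1-ε) - λε/(i+1))·f(F)`. -/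
theorem pm_eigenfunction_identity {V : Type*} [Fintype V] [LinearOrder V]
    (K : Finset (Finset V)) (i : ℕ) (hi : 1 ≤ i)
    (hK : IsComplex K) (hpure : IsPure K i) (hor : Orientable K i)
    (w : Finset V → ℝ) (hwpos : ∀ F ∈ K, 0 < w F)
    (hw1 : ∀ F ∈ faces K i, w F = 1)
    (hw2 : ∀ E ∈ faces K (i - 1), w E = deg K w i E)
    (D : ℝ) (hD : 0 < D)
    (hD' : ∀ F ∈ faces K i, ∑ E ∈ F.powersetCard i, 1 / deg K w i E = 1 / D)
    (f : Finset V → ℝ) (lam : ℝ)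
    (hf : ∃ F ∈ faces K i, f F ≠ 0)
    (heig : ∀ F ∈ faces K i, lapDown K w i f F = lam * f F)
    (ε : ℝ) (hε : ε ∈ Set.Icc (0 : ℝ) 1)
    (F : Finset V) (hF : F ∈ faces K i) :
    ∑ F'' ∈ faces K i, pm K w i ε F F'' * f F''
      = (2 * ε / (D * ((i : ℝ) + 1)) + (1 - ε) - lam * ε / ((i : ℝ) + 1)) * f F := by
  have hlap := heig F hF
  rw [lapDown_eq K w i f hF, hD' F hF] at hlap
  have hdiag : pm K w i ε F F = 1 - ε + ε / ((i : ℝ) + 1) * (1 / D) := by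
    simp only [pm, if_true, hw1 F hF, hD' F hF]
  have hoff : ∑ F' ∈ (faces K i).erase F, pm K w i ε F F' * f F'
      = ε / ((i : ℝ) + 1) * ∑ F' ∈ (faces K i).erase F,
          if (F ∩ F').card = i then 1 / deg K w i (F ∩ F') * f F' else 0 := by
    rw [mul_sum]
    refine sum_congr rfl fun F' hF' => ?_
    obtain ⟨hne, hmem⟩ := mem_erase.1 hF'
    simp only [pm, if_neg hne, hmem, true_and, hw1 F' hmem]
    split_ifs
    · rw [mul_one, ← div_div]
      ring
    · ring
  have hi0 : (i : ℝ) + 1 ≠ 0 := by positivity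
  rw [← add_sum_erase _ _ hF, hdiag, hoff,
    show ∑ F' ∈ (faces K i).erase F,
        (if (F ∩ F').card = i then 1 / deg K w i (F ∩ F') * f F' else 0)
      = 1 / D * f F - lam * f F by linarith]
  field_simp
  ring

end
end SCRicci
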